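/- Let Q be a D-dimensional convex polytope in ℝ^D with m vertices (i.e., the affine hull of Q is all of ℝ^D). Then Q is locally point symmetric if and only if Q has exactly m/2 pairs of strictly antipodal vertices. -/

import Mathlib

open scoped Pointwise

noncomputable section

/-- Points of `ℝ^D` with the Euclidean metric. -/
abbrev Pt (D : ℕ) := EuclideanSpace ℝ (Fin D)

/-- `L(S)`: the set of lattice points of `S`, i.e. points of `S` all of whose
coordinates are integers. -/
def latticePts {D : ℕ} (S : Set (Pt D)) : Set (Pt D) :=
  {x | x ∈ S ∧ ∀ i, ∃ z : ℤ, x i = (z : ℝ)}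

/-- A convex polytope: the convex hull of a finite set of points. -/
def IsPolytope {D : ℕ} (P : Set (Pt D)) : Prop :=
  ∃ V : Set (Pt D), V.Finite ∧ P = convexHull ℝ V

/-- A convex polytope whose vertices (extreme points) all lie in `ℤ^D`. -/
def IsLatticePolytope {D : ℕ} (P : Set (Pt D)) : Prop :=
  IsPolytope P ∧ ∀ v ∈ Set.extremePoints ℝ P, ∀ i, ∃ z : ℤ, v i = (z : ℝ)

/-- `u` and `v` are strictly antipodal vertices of `Q`: there are parallel supporting
hyperplanes `H₁, H₂` of `Q` (with common normal functional `f`) such that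
`H₁ ∩ Q = {u}` and `H₂ ∩ Q = {v}`. -/
def StrictlyAntipodal {D : ℕ} (Q : Set (Pt D)) (u v : Pt D) : Prop :=
  ∃ f : Pt D →ₗ[ℝ] ℝ, f ≠ 0 ∧
    {x | x ∈ Q ∧ ∀ y ∈ Q, f y ≤ f x} = {u} ∧
    {x | x ∈ Q ∧ ∀ y ∈ Q, f x ≤ f y} = {v}

/-- The supporting cone of `Q` at `v`: `v + ⋃_{λ ≥ 0} λ (Q - v)`. -/
def suppCone {D : ℕ} (Q : Set (Pt D)) (v : Pt D) : Set (Pt D) :=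
  {v} + ⋃ (l : ℝ) (_ : 0 ≤ l), l • (Q - ({v} : Set (Pt D)))

/-- `Q` is locally point symmetric: its vertices can be partitioned into pairs
(given by a fixed-point-free involution `σ` of the vertex set) of strictly antipodal
vertices such that each pair `{u, v}` satisfies `C(u) - u = v - C(v)`. -/
def LocallyPointSymmetric {D : ℕ} (Q : Set (Pt D)) : Prop :=
  ∃ σ : Pt D → Pt D, ∀ v ∈ Set.extremePoints ℝ Q,
    σ v ∈ Set.extremePoints ℝ Q ∧ σ v ≠ v ∧ σ (σ v) = v ∧
    StrictlyAntipodal Q v (σ v) ∧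
    suppCone Q v - ({v} : Set (Pt D)) = ({σ v} : Set (Pt D)) - suppCone Q (σ v)

/-- `E` is an edge of `Q`: a 1-dimensional face, i.e. the intersection of `Q` with a
supporting hyperplane which is 1-dimensional. -/
def IsEdge {D : ℕ} (Q E : Set (Pt D)) : Prop :=
  (∃ f : Pt D →ₗ[ℝ] ℝ, f ≠ 0 ∧ E = {x | x ∈ Q ∧ ∀ y ∈ Q, f y ≤ f x}) ∧
    Module.finrank ℝ (affineSpan ℝ E).direction = 1

/-- `B_r(Q)`: lattice points of `Q` within distance `r` of some vertex of `Q`. -/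
def ballFringe {D : ℕ} (Q : Set (Pt D)) (r : ℝ) : Set (Pt D) :=
  {q | q ∈ latticePts Q ∧ ∃ v ∈ Set.extremePoints ℝ Q, dist q v ≤ r}

/-- `M_r(Q) = L(Q) \ B_r(Q)`: the middle lattice points of `Q`. -/
def middlePts {D : ℕ} (Q : Set (Pt D)) (r : ℝ) : Set (Pt D) :=
  latticePts Q \ ballFringe Q r

/-- `P` is point symmetric: `P = x - P` for some point `x`. -/
def PointSymmetric {D : ℕ} (P : Set (Pt D)) : Prop :=
  ∃ x : Pt D, P = ({x} : Set (Pt D)) - P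

/-
The cone `C(v) - v` at a vertex `v` is the polar of the set of functionals that are maximal over `Q`
at `v`. A functional that is maximal only at `v` can be perturbed to be injective on the vertices as
well, and it is then minimal at a single vertex, a strictly antipodal partner of `v`. So no vertex
is isolated in the graph of strictly antipodal pairs, unless `Q` is a point, and this graph has
`m / 2` edges if and only if every vertex has exactly one partner.

If `s` is the only partner of `v`, then, by letting the perturbation tend to zero, every functional
that is maximal at `v` is minimal at `s`. When `v` is also the only partner of `s`, polarity gives
`C(v) - v = s - C(s)`. Conversely, this equality forces every functional that is maximal at `v` to
be minimal at `s`, so that `v` has no other partner.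
-/

open Filter Topology

section UniqueMax

variable {α β : Type*}

/-- `f` attains its maximum over `A` at the point `a` of `A` and at no other point. For a nonzero
linear functional `f`, this says that the supporting hyperplane `f = f a` meets `A` exactly in
`a`. -/
def IsUniqueMaxOn [Preorder β] (f : α → β) (A : Set α) (a : α) : Prop :=
  a ∈ A ∧ ∀ b ∈ A, b ≠ a → f b < f a

theorem IsUniqueMaxOn.isMaxOn [Preorder β] {f : α → β} {A : Set α} {a : α}
    (h : IsUniqueMaxOn f A a) : IsMaxOn f A a := by
  intro b hb
  by_cases hba : b = a
  · exact hba ▸ le_refl (f a)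
  · exact (h.2 b hb hba).le

theorem setOf_forall_le_eq_singleton_iff [LinearOrder β] {f : α → β} {A : Set α} {a : α} :
    {x | x ∈ A ∧ ∀ y ∈ A, f y ≤ f x} = {a} ↔ IsUniqueMaxOn f A a := by
  constructor
  · intro h
    have ha : a ∈ {x | x ∈ A ∧ ∀ y ∈ A, f y ≤ f x} := h ▸ rfl
    refine ⟨ha.1, fun b hb hba => ?_⟩
    by_contra! hle
    exact hba (h.subset ⟨hb, fun y hy => (ha.2 y hy).trans hle⟩)
  · intro h
    refine Set.eq_singleton_iff_unique_mem.2 ⟨⟨h.1, h.isMaxOn⟩, fun x hx => ?_⟩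
    by_contra hxa
    exact (h.2 x hx.1 hxa).not_ge (hx.2 a h.1)

theorem exists_isUniqueMaxOn_of_injOn [LinearOrder β] {f : α → β} {A : Set α} (hA : A.Finite)
    (hne : A.Nonempty) (hf : A.InjOn f) : ∃ a, IsUniqueMaxOn f A a := by
  obtain ⟨a, ha, hmax⟩ := Set.exists_max_image A f hA hne
  exact ⟨a, ha, fun b hb hba => (hmax b hb).lt_of_ne fun h => hba (hf hb ha h)⟩

variable {f g : α → ℝ} {A : Set α} {a : α}

theorem tendsto_add_smul_apply (f g : α → ℝ) (x : α) :
    Tendsto (fun ε : ℝ => (f + ε • g) x) (𝓝 0) (𝓝 (f x)) :=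
  Continuous.tendsto' (by simp only [Pi.add_apply, Pi.smul_apply]; fun_prop) _ _ (by simp)

theorem IsUniqueMaxOn.eventually_add_smul (hA : A.Finite) (hf : IsUniqueMaxOn f A a) (g : α → ℝ) :
    ∀ᶠ ε in 𝓝 (0 : ℝ), IsUniqueMaxOn (f + ε • g) A a := by
  have hlt (b : α) (hb : b ∈ A) : ∀ᶠ ε in 𝓝 (0 : ℝ), b ≠ a → (f + ε • g) b < (f + ε • g) a := by
    rw [eventually_imp_distrib_left]
    exact fun hba =>
      (tendsto_add_smul_apply f g b).eventually_lt (tendsto_add_smul_apply f g a) (hf.2 b hb hba)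
  filter_upwards [hA.eventually_all.2 hlt] with ε hε using ⟨hf.1, hε⟩

theorem IsUniqueMaxOn.add_smul_of_isMaxOn (hg : IsUniqueMaxOn g A a) (hf : IsMaxOn f A a) {ε : ℝ}
    (hε : 0 < ε) : IsUniqueMaxOn (f + ε • g) A a :=
  ⟨hg.1, fun b hb hba => add_lt_add_of_le_of_lt (hf hb) (mul_lt_mul_of_pos_left (hg.2 b hb hba) hε)⟩

theorem isMaxOn_of_eventually_add_smul {l : Filter ℝ} [l.NeBot] (hl : l ≤ 𝓝 0)
    (h : ∀ᶠ ε in l, IsMaxOn (f + ε • g) A a) : IsMaxOn f A a := by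
  have hlim (x : α) : Tendsto (fun ε : ℝ => (f + ε • g) x) l (𝓝 (f x)) :=
    (tendsto_add_smul_apply f g x).mono_left hl
  exact fun b hb => le_of_tendsto_of_tendsto (hlim b) (hlim a) (h.mono fun _ hε => hε hb)

theorem eventually_injOn_add_smul (hA : A.Finite) (hg : A.InjOn g) (f : α → ℝ) :
    ∀ᶠ ε in 𝓝[≠] (0 : ℝ), A.InjOn (f + ε • g) := by
  refine nhdsNE_le_cofinite 0 ?_
  refine (Set.Finite.image2 (fun a b => (f b - f a) / (g a - g b)) hA hA).subset fun ε hε => ?_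
  simp only [Set.mem_compl_iff, Set.mem_ofPred_eq, Set.InjOn, not_forall] at hε
  obtain ⟨a, ha, b, hb, hab, hne⟩ := hε
  refine ⟨a, ha, b, hb, ?_⟩
  have hgab : g a - g b ≠ 0 := sub_ne_zero.2 fun h => hne (hg ha hb h)
  simp only [Pi.add_apply, Pi.smul_apply, smul_eq_mul] at hab
  rw [div_eq_iff hgab]
  linarith

end UniqueMax

theorem exists_dual_injOn {K V : Type*} [Field K] [Infinite K] [AddCommGroup V] [Module K V]
    {A : Set V} (hA : A.Finite) : ∃ f : Module.Dual K V, A.InjOn f := by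
  have : Finite A := hA
  obtain ⟨f, hf⟩ := Module.exists_dual_forall_apply_ne_zero (K := K)
    (fun p : {p : A × A // p.1 ≠ p.2} => (p.1.1 : V) - p.1.2)
    fun p => sub_ne_zero.2 fun h => p.2 (Subtype.ext h)
  refine ⟨f, fun a ha b hb hab => ?_⟩
  by_contra hne
  refine hf ⟨(⟨a, ha⟩, ⟨b, hb⟩), fun h => hne (congrArg Subtype.val h)⟩ ?_
  rw [map_sub, hab, sub_self]

section Convexity

variable {𝕜 E : Type*} [Field 𝕜] [LinearOrder 𝕜] [IsStrictOrderedRing 𝕜] [AddCommGroup E]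
  [Module 𝕜 E] {A : Set E}

theorem isUniqueMaxOn_iff_forall_neg {f : E →ₗ[𝕜] 𝕜} {v : E} (hv : v ∈ A) :
    IsUniqueMaxOn f A v ↔ ∀ x ∈ -v +ᵥ (A \ {v}), f x < 0 := by
  rw [← Set.image_vadd, Set.forall_mem_image]
  simp [IsUniqueMaxOn, hv]

theorem isMaxOn_convexHull {f : E →ₗ[𝕜] 𝕜} {v : E} (hf : IsMaxOn f A v) :
    IsMaxOn f (convexHull 𝕜 A) v :=
  convexHull_min hf (convex_halfSpace_le f.isLinear (f v))

theorem IsUniqueMaxOn.convexHull {f : E →ₗ[𝕜] 𝕜} {v : E} (hf : IsUniqueMaxOn f A v) :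
    IsUniqueMaxOn f (convexHull 𝕜 A) v := by
  have hconv : Convex 𝕜 {y | y = v ∨ f y < f v} := by
    rw [convex_iff_forall_pos]
    rintro x hx y hy a b ha hb hab
    by_cases hxy : x = v ∧ y = v
    · left
      rw [hxy.1, hxy.2, ← add_smul, hab, one_smul]
    · right
      have hx' : f x ≤ f v := hx.elim (fun h => h ▸ le_rfl) le_of_lt
      have hy' : f y ≤ f v := hy.elim (fun h => h ▸ le_rfl) le_of_lt
      have hlt : f x < f v ∨ f y < f v := by
        rw [Set.mem_ofPred_eq] at hx hy
        tauto
      calc f (a • x + b • y) = a * f x + b * f y := by simp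
        _ < a * f v + b * f v := by rcases hlt with h | h <;> nlinarith
        _ = f v := by rw [← add_mul, hab, one_mul]
  have hsub : A ⊆ {y | y = v ∨ f y < f v} := fun w hw => (em (w = v)).imp_right (hf.2 w hw)
  exact ⟨subset_convexHull 𝕜 A hf.1, fun y hy => (convexHull_min hsub hconv hy).resolve_left⟩

theorem zero_notMem_convexHull_insert_neg {x : E} (h0 : 0 ∉ convexHull 𝕜 A)
    (hx : ∀ l : 𝕜, 0 ≤ l → x ∉ l • convexHull 𝕜 (insert 0 A)) :
    0 ∉ convexHull 𝕜 (insert (-x) A) := by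
  have hx0 : x ≠ 0 := by
    rintro rfl
    exact hx 0 le_rfl ⟨0, subset_convexHull 𝕜 _ (Set.mem_insert 0 A), smul_zero 0⟩
  rcases A.eq_empty_or_nonempty with rfl | hne
  · simpa [eq_comm] using hx0
  rw [convexHull_insert hne, convexJoin_singleton_left]
  simp only [Set.mem_iUnion, not_exists]
  rintro y hy ⟨a, b, ha, hb, hab, h⟩
  rcases ha.eq_or_lt with rfl | ha
  · obtain rfl : b = 1 := by simpa using hab
    simp_all
  · refine hx (b / a) (by positivity) ⟨y, convexHull_mono (Set.subset_insert 0 A) hy, ?_⟩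
    have hxy : a • x = b • y := neg_add_eq_zero.1 (by rwa [smul_neg] at h)
    change (b / a) • y = x
    rw [div_eq_inv_mul, mul_smul, ← hxy, inv_smul_smul₀ ha.ne']

end Convexity

section Separation

variable {E : Type*} [AddCommGroup E] [Module ℝ E] [TopologicalSpace E] [IsTopologicalAddGroup E]
  [ContinuousSMul ℝ E] [LocallyConvexSpace ℝ E] [T2Space E] {A : Set E} {x : E}

theorem exists_forall_neg_of_zero_notMem_convexHull (hA : A.Finite) (h0 : 0 ∉ convexHull ℝ A) :
    ∃ f : StrongDual ℝ E, ∀ a ∈ A, f a < 0 := by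
  obtain ⟨f, c, hf, hc⟩ := geometric_hahn_banach_closed_point (convex_convexHull ℝ A)
    (hA.isClosed_convexHull ℝ) h0
  rw [map_zero] at hc
  exact ⟨f, fun a ha => (hf a (subset_convexHull ℝ A ha)).trans hc⟩

theorem exists_forall_neg_and_pos_of_notMem_smul_convexHull (hA : A.Finite)
    (h0 : 0 ∉ convexHull ℝ A)
    (hx : ∀ l : ℝ, 0 ≤ l → x ∉ l • convexHull ℝ (insert 0 A)) :
    ∃ f : StrongDual ℝ E, (∀ a ∈ A, f a < 0) ∧ 0 < f x := by
  obtain ⟨f, hf⟩ := exists_forall_neg_of_zero_notMem_convexHull (hA.insert (-x))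
    (zero_notMem_convexHull_insert_neg h0 hx)
  refine ⟨f, fun a ha => hf a (Set.mem_insert_of_mem _ ha), ?_⟩
  simpa using hf (-x) (Set.mem_insert _ _)

end Separation

section Graphs

variable {V : Type*} (G : SimpleGraph V)

theorem two_mul_ncard_edgeSet_eq_card_iff [Finite V] (hG : Nontrivial V → ∀ v, ∃ w, G.Adj v w) :
    2 * G.edgeSet.ncard = Nat.card V ↔ ∀ v, ∃! w, G.Adj v w := by
  classical
  have := Fintype.ofFinite V
  have hsum : 2 * G.edgeSet.ncard = ∑ v, G.degree v := by
    rw [G.sum_degrees_eq_twice_card_edges, ← SimpleGraph.coe_edgeFinset, Set.ncard_coe_finset]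
  simp only [← SimpleGraph.degree_eq_one_iff_existsUnique_adj]
  constructor
  · intro h v
    have : Nontrivial V := by
      have : Nonempty V := ⟨v⟩
      have := Nat.card_pos (α := V)
      exact Finite.one_lt_card_iff_nontrivial.1 (by omega)
    have hdeg (v : V) : 1 ≤ G.degree v := (G.degree_pos_iff_exists_adj v).2 (hG this v)
    have hone : ∑ _v : V, 1 = ∑ v, G.degree v := by simp [← hsum, h]
    exact ((Finset.sum_eq_sum_iff_of_le fun v _ => hdeg v).1 hone v (Finset.mem_univ v)).symm
  · intro h
    simp [hsum, h]

end Graphs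

section Polytopes

variable {D : ℕ} {Q : Set (Pt D)} {u v s w x : Pt D} {f : Pt D →ₗ[ℝ] ℝ}

theorem strictlyAntipodal_iff :
    StrictlyAntipodal Q u v ↔ ∃ f : Pt D →ₗ[ℝ] ℝ, f ≠ 0 ∧ IsUniqueMaxOn f Q u ∧
      IsUniqueMaxOn (-f) Q v := by
  refine exists_congr fun f => and_congr_right fun _ => and_congr ?_ ?_
  · exact setOf_forall_le_eq_singleton_iff
  · rw [← setOf_forall_le_eq_singleton_iff]
    simp only [LinearMap.neg_apply, neg_le_neg_iff]

theorem StrictlyAntipodal.symm (h : StrictlyAntipodal Q u v) : StrictlyAntipodal Q v u := by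
  rw [strictlyAntipodal_iff] at h ⊢
  obtain ⟨f, hf, hu, hv⟩ := h
  exact ⟨-f, neg_ne_zero.2 hf, hv, by simpa using hu⟩

/-- The graph on the vertices of `Q` whose edges join strictly antipodal vertices. -/
def antipodalGraph (Q : Set (Pt D)) : SimpleGraph (Set.extremePoints ℝ Q) where
  Adj u v := u ≠ v ∧ StrictlyAntipodal Q u v
  symm := ⟨fun _ _ h => ⟨h.1.symm, h.2.symm⟩⟩
  loopless := ⟨fun _ h => h.1 rfl⟩

theorem ncard_setOf_antipodal_pair_eq_ncard_edgeSet :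
    {p : Set (Pt D) | ∃ u v : Pt D, u ≠ v ∧ u ∈ Set.extremePoints ℝ Q ∧
      v ∈ Set.extremePoints ℝ Q ∧ StrictlyAntipodal Q u v ∧ p = {u, v}}.ncard =
      (antipodalGraph Q).edgeSet.ncard := by
  let toSet (e : Sym2 (Set.extremePoints ℝ Q)) : Set (Pt D) := (e.map Subtype.val : Sym2 (Pt D))
  have htoSet : toSet.Injective :=
    SetLike.coe_injective.comp (Sym2.map.injective Subtype.val_injective)
  rw [← Set.ncard_image_of_injective _ htoSet]
  congr 1
  ext p
  constructor
  · rintro ⟨u, v, huv, hu, hv, h, rfl⟩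
    exact ⟨s(⟨u, hu⟩, ⟨v, hv⟩), ⟨mt (congrArg Subtype.val) huv, h⟩, by simp [toSet]⟩
  · rintro ⟨⟨u, v⟩, ⟨huv, h⟩, rfl⟩
    exact ⟨u, v, mt Subtype.ext huv, u.2, v.2, h, by simp [toSet]⟩

theorem mem_suppCone_sub_singleton :
    x ∈ suppCone Q v - {v} ↔ ∃ l : ℝ, 0 ≤ l ∧ x ∈ l • (-v +ᵥ Q) := by
  have hQv : Q - {v} = -v +ᵥ Q := by
    rw [sub_eq_neg_add, Set.neg_singleton, ← vadd_eq_add, Set.singleton_vadd]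
  rw [suppCone, hQv, add_comm, add_sub_assoc, Set.singleton_sub_singleton, sub_self,
    Set.singleton_zero, add_zero]
  simp only [Set.mem_iUnion, exists_prop]

theorem mem_singleton_sub_suppCone : x ∈ {v} - suppCone Q v ↔ -x ∈ suppCone Q v - {v} := by
  rw [← Set.mem_neg, neg_sub]

theorem map_nonpos_of_mem_suppCone (hf : IsMaxOn f Q v) (hx : x ∈ suppCone Q v - {v}) :
    f x ≤ 0 := by
  obtain ⟨l, hl, _, ⟨q, hq, rfl⟩, rfl⟩ := mem_suppCone_sub_singleton.1 hx
  have hfq : f q ≤ f v := hf hq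
  have : l * (f q - f v) ≤ 0 := mul_nonpos_of_nonneg_of_nonpos hl (sub_nonpos.2 hfq)
  simpa [neg_add_eq_sub] using this

theorem StrictlyAntipodal.eq_of_suppCone_eq (hs : s ∈ Q)
    (hcone : suppCone Q v - {v} = {s} - suppCone Q s) (h : StrictlyAntipodal Q v w) : w = s := by
  obtain ⟨f, -, hv, hw⟩ := strictlyAntipodal_iff.1 h
  have hmem : s - w ∈ suppCone Q v - {v} := by
    rw [hcone, mem_singleton_sub_suppCone, mem_suppCone_sub_singleton]
    exact ⟨1, zero_le_one, by simpa using ⟨w, hw.1, by simp [neg_add_eq_sub]⟩⟩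
  have hle : f s ≤ f w := by simpa using map_nonpos_of_mem_suppCone hv.isMaxOn hmem
  by_contra hws
  exact (neg_lt_neg_iff.1 (hw.2 s hs (Ne.symm hws))).not_ge hle

namespace IsPolytope

theorem finite_extremePoints (hQ : IsPolytope Q) : (Set.extremePoints ℝ Q).Finite := by
  obtain ⟨V, hV, rfl⟩ := hQ
  exact hV.subset extremePoints_convexHull_subset

theorem convexHull_extremePoints (hQ : IsPolytope Q) :
    convexHull ℝ (Set.extremePoints ℝ Q) = Q := by
  rw [← (hQ.finite_extremePoints.isClosed_convexHull ℝ).closure_eq]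
  obtain ⟨V, hV, rfl⟩ := hQ
  exact closure_convexHull_extremePoints (hV.isCompact_convexHull ℝ) (convex_convexHull ℝ V)

theorem zero_notMem_convexHull_neg_vadd_sdiff (hQ : IsPolytope Q) (hv : v ∈ Set.extremePoints ℝ Q) :
    0 ∉ convexHull ℝ (-v +ᵥ (Set.extremePoints ℝ Q \ {v})) := by
  have hconv : Convex ℝ Q := hQ.convexHull_extremePoints ▸ convex_convexHull ℝ _
  rw [convexHull_vadd, Set.mem_vadd_set_iff_neg_vadd_mem]
  simpa using convexIndependent_set_iff_notMem_convexHull_sdiff.1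
    hconv.convexIndependent_extremePoints v hv

theorem exists_isUniqueMaxOn_extremePoints_and_pos (hQ : IsPolytope Q)
    (hv : v ∈ Set.extremePoints ℝ Q) (hx : x ∉ suppCone Q v - {v}) :
    ∃ f : Pt D →ₗ[ℝ] ℝ, IsUniqueMaxOn f (Set.extremePoints ℝ Q) v ∧ 0 < f x := by
  have hcone : ∀ l : ℝ, 0 ≤ l →
      x ∉ l • convexHull ℝ (insert 0 (-v +ᵥ (Set.extremePoints ℝ Q \ {v}))) := by
    have hinsert : insert 0 (-v +ᵥ (Set.extremePoints ℝ Q \ {v})) =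
        -v +ᵥ Set.extremePoints ℝ Q := by
      rw [← neg_add_cancel v, ← vadd_eq_add, ← Set.vadd_set_insert, Set.insert_sdiff_singleton,
        Set.insert_eq_of_mem hv]
    rw [hinsert, convexHull_vadd, hQ.convexHull_extremePoints]
    exact fun l hl hxl => hx (mem_suppCone_sub_singleton.2 ⟨l, hl, hxl⟩)
  obtain ⟨f, hf, hfx⟩ := exists_forall_neg_and_pos_of_notMem_smul_convexHull
    hQ.finite_extremePoints.sdiff.vadd_set
    (hQ.zero_notMem_convexHull_neg_vadd_sdiff hv) hcone
  exact ⟨f, (isUniqueMaxOn_iff_forall_neg hv).2 hf, hfx⟩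

theorem exists_isUniqueMaxOn_extremePoints_and_injOn (hQ : IsPolytope Q)
    (hv : v ∈ Set.extremePoints ℝ Q) : ∃ f : Pt D →ₗ[ℝ] ℝ,
      IsUniqueMaxOn f (Set.extremePoints ℝ Q) v ∧ (Set.extremePoints ℝ Q).InjOn f := by
  have hfin := hQ.finite_extremePoints
  obtain ⟨f, hf⟩ := exists_forall_neg_of_zero_notMem_convexHull hfin.sdiff.vadd_set
    (hQ.zero_notMem_convexHull_neg_vadd_sdiff hv)
  have hmax := (isUniqueMaxOn_iff_forall_neg (f := f.toLinearMap) hv).2 hf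
  obtain ⟨g, hg⟩ := exists_dual_injOn (K := ℝ) hfin
  obtain ⟨ε, hε_max, hε_inj⟩ := (((hmax.eventually_add_smul hfin g).filter_mono
    nhdsWithin_le_nhds).and (eventually_injOn_add_smul hfin hg f)).exists
  exact ⟨f + ε • g, hε_max, hε_inj⟩

theorem mem_suppCone_sub_singleton_iff (hQ : IsPolytope Q) (hv : v ∈ Set.extremePoints ℝ Q) :
    x ∈ suppCone Q v - {v} ↔ ∀ f : Pt D →ₗ[ℝ] ℝ, IsMaxOn f Q v → f x ≤ 0 := by
  refine ⟨fun hx f hf => map_nonpos_of_mem_suppCone hf hx, fun h => ?_⟩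
  by_contra hx
  obtain ⟨f, hf, hfx⟩ := hQ.exists_isUniqueMaxOn_extremePoints_and_pos hv hx
  have hmax := isMaxOn_convexHull hf.isMaxOn
  rw [hQ.convexHull_extremePoints] at hmax
  exact (h f hmax).not_gt hfx

variable [Nontrivial (Set.extremePoints ℝ Q)] {a b : Set.extremePoints ℝ Q}

theorem exists_adj_and_isMaxOn_neg (hQ : IsPolytope Q)
    (hf : IsUniqueMaxOn f (Set.extremePoints ℝ Q) a) (hinj : (Set.extremePoints ℝ Q).InjOn f) :
    ∃ b, (antipodalGraph Q).Adj a b ∧ IsMaxOn (-f) Q b := by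
  obtain ⟨w, hw⟩ := exists_isUniqueMaxOn_of_injOn (f := -f) hQ.finite_extremePoints ⟨a, a.2⟩
    fun x hx y hy hxy => hinj hx hy (neg_injective hxy)
  obtain ⟨c, hca⟩ := exists_ne a
  have hlt : f c < f a := hf.2 c c.2 fun h => hca (Subtype.ext h)
  have hne : a ≠ ⟨w, hw.1⟩ := by
    rintro rfl
    exact hlt.not_ge (neg_le_neg_iff.1 (hw.isMaxOn c.2))
  have hf0 : f ≠ 0 := by
    rintro rfl
    exact hlt.ne rfl
  have hfQ := hf.convexHull
  have hwQ := IsUniqueMaxOn.convexHull (f := -f) hw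
  rw [hQ.convexHull_extremePoints] at hfQ hwQ
  exact ⟨⟨w, hw.1⟩, ⟨hne, strictlyAntipodal_iff.2 ⟨f, hf0, hfQ, hwQ⟩⟩, hwQ.isMaxOn⟩

theorem exists_antipodalGraph_adj (hQ : IsPolytope Q) (a : Set.extremePoints ℝ Q) :
    ∃ b, (antipodalGraph Q).Adj a b := by
  obtain ⟨f, hf, hinj⟩ := hQ.exists_isUniqueMaxOn_extremePoints_and_injOn a.2
  obtain ⟨b, hab, -⟩ := hQ.exists_adj_and_isMaxOn_neg hf hinj
  exact ⟨b, hab⟩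

theorem isMaxOn_neg_of_forall_adj_eq (hQ : IsPolytope Q)
    (hb : ∀ c, (antipodalGraph Q).Adj a c → c = b) (hf : IsMaxOn f Q a) :
    IsMaxOn (-f) Q b := by
  obtain ⟨g, hg, hinj⟩ := hQ.exists_isUniqueMaxOn_extremePoints_and_injOn a.2
  refine isMaxOn_of_eventually_add_smul (g := -g) (l := 𝓝[>] 0) nhdsWithin_le_nhds ?_
  filter_upwards [self_mem_nhdsWithin, (eventually_injOn_add_smul hQ.finite_extremePoints hinj
    f).filter_mono (nhdsGT_le_nhdsNE 0)] with ε hε hε_inj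
  have hε_max := hg.add_smul_of_isMaxOn (hf.on_subset extremePoints_subset) hε
  obtain ⟨c, hac, hc⟩ := hQ.exists_adj_and_isMaxOn_neg (f := f + ε • g) hε_max hε_inj
  have hneg : -(f + ε • g) = -f + ε • -g := by module
  rw [hb c hac, hneg] at hc
  exact hc

theorem suppCone_sub_eq_of_forall_adj_eq (hQ : IsPolytope Q)
    (hb : ∀ c, (antipodalGraph Q).Adj a c → c = b) (ha : ∀ c, (antipodalGraph Q).Adj b c → c = a) :
    suppCone Q a - {(a : Pt D)} = {(b : Pt D)} - suppCone Q b := by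
  have hneg (f : Pt D →ₗ[ℝ] ℝ) : IsMaxOn f Q a ↔ IsMaxOn (-f) Q b :=
    ⟨hQ.isMaxOn_neg_of_forall_adj_eq hb, fun h => by
      simpa using hQ.isMaxOn_neg_of_forall_adj_eq (f := -f) ha h⟩
  ext x
  rw [mem_singleton_sub_suppCone, hQ.mem_suppCone_sub_singleton_iff a.2,
    hQ.mem_suppCone_sub_singleton_iff b.2,
    (neg_surjective (G := Pt D →ₗ[ℝ] ℝ)).forall (p := fun f => IsMaxOn f Q b → _)]
  simp [hneg]

end IsPolytope

theorem LocallyPointSymmetric.existsUnique_adj (h : LocallyPointSymmetric Q)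
    (a : Set.extremePoints ℝ Q) : ∃! b, (antipodalGraph Q).Adj a b := by
  obtain ⟨σ, hσ⟩ := h
  obtain ⟨hmem, hne, -, hanti, hcone⟩ := hσ a a.2
  refine ⟨⟨σ a, hmem⟩, ⟨fun h => hne (congrArg Subtype.val h).symm, hanti⟩, fun b hab => ?_⟩
  exact Subtype.ext (hab.2.eq_of_suppCone_eq hmem.1 hcone)

theorem IsPolytope.locallyPointSymmetric_iff (hQ : IsPolytope Q) :
    LocallyPointSymmetric Q ↔ ∀ a, ∃! b, (antipodalGraph Q).Adj a b := by
  refine ⟨LocallyPointSymmetric.existsUnique_adj, fun h => ?_⟩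
  choose τ hτ huniq using h
  have hinv a : τ (τ a) = a := (huniq (τ a) a (hτ a).symm).symm
  refine ⟨Function.extend Subtype.val (Subtype.val ∘ τ) id, fun v hv => ?_⟩
  lift v to Set.extremePoints ℝ Q using hv
  have : Nontrivial (Set.extremePoints ℝ Q) := ⟨v, τ v, (hτ v).ne⟩
  simp only [Subtype.val_injective.extend_apply, Function.comp_apply, hinv]
  refine ⟨(τ v).2, fun h => (hτ v).ne (Subtype.ext h.symm), trivial, (hτ v).2, ?_⟩
  exact hQ.suppCone_sub_eq_of_forall_adj_eq (huniq v) fun c hc => hinv v ▸ huniq (τ v) c hc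

end Polytopes

theorem stmt9_general {D : ℕ} (Q : Set (Pt D)) (hQ : IsPolytope Q) :
    LocallyPointSymmetric Q ↔
      2 * ({p : Set (Pt D) | ∃ u v : Pt D, u ≠ v ∧ u ∈ Set.extremePoints ℝ Q ∧
        v ∈ Set.extremePoints ℝ Q ∧ StrictlyAntipodal Q u v ∧ p = {u, v}}).ncard =
      (Set.extremePoints ℝ Q).ncard := by
  have : Finite (Set.extremePoints ℝ Q) := hQ.finite_extremePoints
  rw [hQ.locallyPointSymmetric_iff, ncard_setOf_antipodal_pair_eq_ncard_edgeSet,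
    ← Nat.card_coe_set_eq]
  refine (two_mul_ncard_edgeSet_eq_card_iff _ fun hV => ?_).symm
  exact hQ.exists_antipodalGraph_adj

/-- A full-dimensional convex polytope `Q ⊆ ℝ^D` with `m` vertices is
locally point symmetric if and only if it has exactly `m/2` pairs of strictly antipodal
vertices. -/
theorem stmt9 {D : ℕ} (Q : Set (Pt D)) (hQ : IsPolytope Q)
    (hfull : affineSpan ℝ Q = ⊤) (m : ℕ) (hm : (Set.extremePoints ℝ Q).ncard = m) :
    LocallyPointSymmetric Q ↔
      2 * ({p : Set (Pt D) | ∃ u v : Pt D, u ≠ v ∧ u ∈ Set.extremePoints ℝ Q ∧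
        v ∈ Set.extremePoints ℝ Q ∧ StrictlyAntipodal Q u v ∧ p = {u, v}}).ncard = m :=
  hm ▸ stmt9_general Q hQ
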